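/- Suppose f : [0,1]^M → [0,1]^M is continuous and of the form f = (f₁,...,f_M) where the first M₁ coordinates f₁,...,f_{M₁} depend only on x₁,...,x_{M₁}. Then the restricted system x_i = f_i(x₁,...,x_{M₁}), i = 1,...,M₁, has a solution in [0,1]^{M₁}, and for any such solution (x̄₁,...,x̄_{M₁}) there exist x̄_{M₁+1},...,x̄_M ∈ [0,1] such that (x̄₁,...,x̄_M) solves the full system x = f(x). -/

import Mathlib

/-!
The heart of the matter is Brouwer's theorem for the cube, obtained from a mod 2 discrete Stokes
formula. Label the vertices of the grid `{0, …, p}ⁿ` by `L₁, …, Lₙ`, where `L_d` is `0` on the face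
`x_d = 0` and `1` on the face `x_d = p`. The cochain `δL₁ ∪ ⋯ ∪ δLₙ` is the coboundary of
`L₁ · (δL₂ ∪ ⋯ ∪ δLₙ)`, and a product containing `δL_d` vanishes on the two faces where `L_d` is
constant, so its total over the grid equals the total of `δL₂ ∪ ⋯ ∪ δLₙ` over the face `x₁ = p`, and
by induction is `1`. Hence it is nonzero on some small cube, where every label must take both
values; taking the signs of the coordinates of `f x - x` as labels gives approximate fixed points.

To extend a solution on a set `s` of coordinates that refer only to each other, apply Brouwer's
theorem to `f` with the coordinates in `s` overwritten by the given solution.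
-/

open Finset

variable {ι : Type*}

/-- Cubical cochains mod 2 on the lattice `ι → ℕ`, of all degrees at once: `ω A x` is the value of
`ω` on the cube with lowest vertex `x` and edge directions `A`. -/
abbrev CubicalCochain (ι : Type*) := Finset ι → (ι → ℕ) → ZMod 2

namespace CubicalCochain

/-- The vertices of the cube with lowest vertex `x` and edge directions `A`, encoded as an order
interval. -/
def cubeVertices (A : Finset ι) (x : ι → ℕ) : Set (ι → ℕ) :=
  Set.Icc x (x + (A : Set ι).indicator 1)

theorem cubeVertices_univ [Fintype ι] (x : ι → ℕ) : cubeVertices univ x = Set.Icc x (x + 1) := by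
  simp [cubeVertices]

theorem eq_of_mem_cubeVertices {A : Finset ι} {x z : ι → ℕ} {i : ι} (hz : z ∈ cubeVertices A x)
    (hi : i ∉ A) : z i = x i := by
  have h_le := hz.2 i
  simp only [Pi.add_apply, Set.indicator_of_notMem (mem_coe.not.2 hi), add_zero] at h_le
  exact h_le.antisymm (hz.1 i)

variable [DecidableEq ι]

/-- The coboundary operator, the sum over the two faces in each edge direction of a cube; mod 2
there are no signs. -/
def coboundary (ω : CubicalCochain ι) : CubicalCochain ι := fun A x =>
  ∑ d ∈ A, (ω (A.erase d) (x + Pi.single d 1) + ω (A.erase d) x)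

theorem coboundary_coboundary (ω : CubicalCochain ι) : coboundary (coboundary ω) = 0 := by
  funext A x
  let F (d e : ι) : ZMod 2 :=
    ω ((A.erase d).erase e) (x + Pi.single d 1 + Pi.single e 1) +
      ω ((A.erase d).erase e) (x + Pi.single d 1) +
      (ω ((A.erase d).erase e) (x + Pi.single e 1) + ω ((A.erase d).erase e) x)
  have F_symm (d e : ι) : F d e = F e d := by
    simp only [F, erase_right_comm (a := e), add_right_comm x (Pi.single e 1)]
    ring
  calc coboundary (coboundary ω) A x = ∑ d ∈ A, ∑ e ∈ A.erase d, F d e := by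
        simp only [coboundary, ← sum_add_distrib, F]
    _ = ∑ q ∈ A.sigma fun d => A.erase d, F q.1 q.2 := sum_sigma' ..
    _ = 0 := by
        refine sum_involution (fun q _ => ⟨q.2, q.1⟩) (fun q _ => ?_) (fun q hq _ h => ?_)
          (fun q hq => ?_) fun q _ => rfl
        · rw [F_symm q.2, CharTwo.add_self_eq_zero]
        · exact (mem_erase.1 (mem_sigma.1 hq).2).1 (congrArg Sigma.fst h)
        · simp only [mem_sigma, mem_erase] at hq ⊢
          exact ⟨hq.2.2, hq.2.1.symm, hq.1⟩

/-- The Leibniz rule `δ(L ω) = δL ∪ ω + L δω` for a function `L` on the vertices. -/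
theorem coboundary_smul_apply (L : (ι → ℕ) → ZMod 2) (ω : CubicalCochain ι) (A : Finset ι)
    (x : ι → ℕ) :
    coboundary (L • ω) A x =
      ∑ d ∈ A, (L (x + Pi.single d 1) + L x) * ω (A.erase d) (x + Pi.single d 1) +
        L x * coboundary ω A x := by
  simp only [coboundary, Pi.smul_apply, smul_eq_mul, Pi.mul_apply, mul_sum, ← sum_add_distrib]
  refine sum_congr rfl fun d _ => ?_
  linear_combination
    -CharTwo.add_self_eq_zero (L x * ω (A.erase d) (x + Pi.single d 1))

/-- The cup product `δL₁ ∪ ⋯ ∪ δLₘ`, written as `δ(L₁ δ(L₂ ⋯ δ(Lₘ)))`. It is the cup product on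
cubes of dimension `m` only, since the empty product is taken to be `1` on all cubes. -/
def cupCoboundaries : List ((ι → ℕ) → ZMod 2) → CubicalCochain ι
  | [] => 1
  | L :: Ls => coboundary (L • cupCoboundaries Ls)

theorem coboundary_cupCoboundaries (Ls : List ((ι → ℕ) → ZMod 2)) :
    coboundary (cupCoboundaries Ls) = 0 := by
  cases Ls with
  | nil =>
    funext A x
    exact sum_eq_zero fun _ _ => CharTwo.add_self_eq_zero (1 : ZMod 2)
  | cons L Ls => exact coboundary_coboundary _

theorem cupCoboundaries_cons_apply (L : (ι → ℕ) → ZMod 2) (Ls : List ((ι → ℕ) → ZMod 2))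
    (A : Finset ι) (x : ι → ℕ) :
    cupCoboundaries (L :: Ls) A x =
      ∑ d ∈ A, (L (x + Pi.single d 1) + L x) *
        cupCoboundaries Ls (A.erase d) (x + Pi.single d 1) := by
  simp [cupCoboundaries, coboundary_smul_apply, coboundary_cupCoboundaries]

theorem cubeVertices_erase_subset {A : Finset ι} {d : ι} (hd : d ∈ A) (x : ι → ℕ) :
    cubeVertices (A.erase d) (x + Pi.single d 1) ⊆ cubeVertices A x := by
  have h_top : x + Pi.single d 1 + ((A.erase d : Finset ι) : Set ι).indicator 1 =
      x + (A : Set ι).indicator 1 := by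
    funext i
    by_cases hi : i = d
    · subst hi; simp [hd]
    · simp [hi, Set.indicator_apply]
  rw [cubeVertices, h_top]
  exact Set.Icc_subset_Icc_left le_self_add

theorem add_single_mem_cubeVertices {A : Finset ι} {d : ι} (hd : d ∈ A) (x : ι → ℕ) :
    x + Pi.single d 1 ∈ cubeVertices A x :=
  cubeVertices_erase_subset hd x (Set.left_mem_Icc.2 le_self_add)

theorem cupCoboundaries_eq_zero {L : (ι → ℕ) → ZMod 2} {Ls : List ((ι → ℕ) → ZMod 2)}
    {A : Finset ι} {x : ι → ℕ} {c : ZMod 2} (hL : L ∈ Ls) (hc : ∀ z ∈ cubeVertices A x, L z = c) :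
    cupCoboundaries Ls A x = 0 := by
  induction Ls generalizing A x with
  | nil => simp at hL
  | cons L' Ls ih =>
    rw [cupCoboundaries_cons_apply]
    refine sum_eq_zero fun d hd => ?_
    rcases List.mem_cons.1 hL with rfl | hL
    · rw [hc _ (add_single_mem_cubeVertices hd x), hc x (Set.left_mem_Icc.2 le_self_add),
        CharTwo.add_self_eq_zero, zero_mul]
    · rw [ih hL fun z hz => hc z (cubeVertices_erase_subset hd x hz), mul_zero]

variable [Fintype ι]

/-- The lowest vertices of the unit cubes with edge directions `A` that tile the face
`{x | ∀ i ∉ A, x i = p}` of the grid `{0, …, p}^ι`. -/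
def gridFace (p : ℕ) (A : Finset ι) : Finset (ι → ℕ) :=
  Fintype.piFinset fun i => if i ∈ A then range p else {p}

theorem mem_gridFace {p : ℕ} {A : Finset ι} {y : ι → ℕ} :
    y ∈ gridFace p A ↔ (∀ i ∈ A, y i < p) ∧ ∀ i ∉ A, y i = p := by
  simp only [gridFace, Fintype.mem_piFinset, ← forall_and]
  refine forall_congr' fun i => ?_
  by_cases hi : i ∈ A <;> simp [hi]

theorem sum_gridFace (p : ℕ) {A : Finset ι} {d : ι} (hd : d ∈ A) (g : (ι → ℕ) → ZMod 2) :
    ∑ y ∈ gridFace p A, g y =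
      ∑ y ∈ gridFace p (A.erase d), ∑ k ∈ range p, g (Function.update y d k) := by
  rw [← sum_product']
  refine sum_bij' (fun y _ => (Function.update y d p, y d))
    (fun q _ => Function.update q.1 d q.2) ?_ ?_ ?_ ?_ ?_
  · intro y hy
    rw [mem_gridFace] at hy
    simp only [mem_product, mem_gridFace, mem_range, mem_erase]
    grind
  · intro q hq
    simp only [mem_product, mem_gridFace, mem_range, mem_erase] at hq
    rw [mem_gridFace]
    grind
  · simp
  · rintro ⟨y, k⟩ hq
    have hy : y d = p := (mem_gridFace.1 (mem_product.1 hq).1).2 d (notMem_erase d A)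
    simp [← hy]
  · simp

theorem sum_gridFace_add_single (p : ℕ) {A : Finset ι} {d : ι} (hd : d ∈ A)
    (g : (ι → ℕ) → ZMod 2) :
    ∑ y ∈ gridFace p A, (g (y + Pi.single d 1) + g y) =
      ∑ y ∈ gridFace p (A.erase d), (g y + g (Function.update y d 0)) := by
  rw [sum_gridFace p hd]
  refine sum_congr rfl fun y hy => ?_
  have hyd : Function.update y d p = y :=
    Function.update_eq_self_iff.2 ((mem_gridFace.1 hy).2 d (notMem_erase d A)).symm
  have h_succ (k : ℕ) :
      Function.update y d k + Pi.single d 1 = Function.update y d (k + 1) := by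
    funext i
    by_cases hi : i = d
    · subst hi; simp
    · simp [hi]
  simp only [h_succ, ← CharTwo.sub_eq_add]
  rw [sum_range_sub fun k => g (Function.update y d k), hyd]

theorem sum_coboundary_gridFace (p : ℕ) (A : Finset ι) (ω : CubicalCochain ι) :
    ∑ y ∈ gridFace p A, coboundary ω A y =
      ∑ d ∈ A, ∑ y ∈ gridFace p (A.erase d),
        (ω (A.erase d) y + ω (A.erase d) (Function.update y d 0)) := by
  simp only [coboundary]
  rw [sum_comm]
  exact sum_congr rfl fun d hd => sum_gridFace_add_single p hd (ω (A.erase d))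

theorem sum_cupCoboundaries_gridFace {p : ℕ} {L : ι → (ι → ℕ) → ZMod 2}
    (h_zero : ∀ d y, y d = 0 → L d y = 0) (h_one : ∀ d y, y d = p → L d y = 1) {l : List ι}
    (hl : l.Nodup) :
    ∑ y ∈ gridFace p l.toFinset, cupCoboundaries (l.map L) l.toFinset y = 1 := by
  induction l with
  | nil => simp [gridFace, Fintype.piFinset_singleton, cupCoboundaries]
  | cons d l ih =>
    obtain ⟨hdl, hl⟩ := List.nodup_cons.1 hl
    set A := (d :: l).toFinset with hA
    have hAd : A.erase d = l.toFinset := by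
      rw [hA, List.toFinset_cons, erase_insert (by simpa using hdl)]
    have vanish {e : ι} (he : e ∈ l) {c : ℕ} {v : ZMod 2} (hv : ∀ z, z e = c → L e z = v)
        {y : ι → ℕ} (hy : y e = c) : cupCoboundaries (l.map L) (A.erase e) y = 0 :=
      cupCoboundaries_eq_zero (List.mem_map_of_mem he) fun z hz =>
        hv z ((eq_of_mem_cubeVertices hz (notMem_erase e A)).trans hy)
    rw [List.map_cons, cupCoboundaries, sum_coboundary_gridFace, sum_eq_single d]
    · rw [hAd, ← ih hl]
      refine sum_congr rfl fun y hy => ?_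
      have hyd : y d = p := (mem_gridFace.1 hy).2 d (by simpa using hdl)
      simp [h_one d y hyd, h_zero d (Function.update y d 0)]
    · intro e heA hed
      have he : e ∈ l := by simpa [hA, hed] using heA
      refine sum_eq_zero fun y hy => ?_
      have hye : y e = p := (mem_gridFace.1 hy).2 e (notMem_erase e A)
      simp [vanish he (h_one e) hye, vanish he (h_zero e) (y := Function.update y e 0)]
    · simp [hA]

end CubicalCochain

open CubicalCochain in
/-- Kuhn's cubical analogue of Sperner's lemma. -/
theorem exists_unitCube_labels_eq_zero_and_one [Finite ι] {p : ℕ} {L : ι → (ι → ℕ) → ZMod 2}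
    (h_zero : ∀ d y, y d = 0 → L d y = 0) (h_one : ∀ d y, y d = p → L d y = 1) :
    ∃ y : ι → ℕ, (∀ i, y i < p) ∧
      ∀ d, ∃ u ∈ Set.Icc y (y + 1), ∃ v ∈ Set.Icc y (y + 1), L d u = 0 ∧ L d v = 1 := by
  classical
  cases nonempty_fintype ι
  have h_sum := sum_cupCoboundaries_gridFace h_zero h_one (nodup_toList univ)
  rw [toList_toFinset] at h_sum
  obtain ⟨y, hy, h_ne⟩ := exists_ne_zero_of_sum_ne_zero (h_sum.trans_ne one_ne_zero)
  refine ⟨y, fun i => (mem_gridFace.1 hy).1 i (mem_univ i), fun d => ?_⟩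
  have not_const (c : ZMod 2) : ∃ z ∈ Set.Icc y (y + 1), L d z ≠ c := by
    by_contra! hc
    rw [← cubeVertices_univ] at hc
    exact h_ne (cupCoboundaries_eq_zero (List.mem_map_of_mem (mem_toList.2 (mem_univ d))) hc)
  obtain ⟨u, hu, hu_ne⟩ := not_const 1
  obtain ⟨v, hv, hv_ne⟩ := not_const 0
  exact ⟨u, hu, v, hv, not_imp_comm.1 (Fin.eq_one_of_ne_zero _) hu_ne,
    Fin.eq_one_of_ne_zero _ hv_ne⟩

/-- The point `x / p` of the cube `[0, 1]^ι` with grid coordinates `x` in `{0, …, p}^ι`. -/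
noncomputable def gridPoint (p : ℕ) (x : ι → ℕ) : ι → ℝ := fun i => x i / p

theorem gridPoint_mem_Icc {p : ℕ} {x : ι → ℕ} (hx : ∀ i, x i ≤ p) :
    gridPoint p x ∈ Set.Icc (0 : ι → ℝ) 1 :=
  ⟨fun i => div_nonneg (x i).cast_nonneg p.cast_nonneg,
    fun i => div_le_one_of_le₀ (Nat.cast_le.2 (hx i)) p.cast_nonneg⟩

theorem dist_gridPoint_le [Fintype ι] (p : ℕ) {u y : ι → ℕ} (hu : u ∈ Set.Icc y (y + 1)) :
    dist (gridPoint p u) (gridPoint p y) ≤ 1 / p := by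
  refine (dist_pi_le_iff (by positivity)).2 fun i => ?_
  have h_lower : (y i : ℝ) ≤ u i := Nat.cast_le.2 (hu.1 i)
  have h_upper : (u i : ℝ) ≤ y i + 1 := mod_cast hu.2 i
  rw [gridPoint, gridPoint, Real.dist_eq, ← sub_div,
    abs_of_nonneg (div_nonneg (sub_nonneg.2 h_lower) p.cast_nonneg)]
  gcongr
  linarith

section PoincareMiranda

variable [Finite ι] {g : (ι → ℝ) → ι → ℝ}

theorem exists_gridPoint_nonneg_and_nonpos {p : ℕ} (hp : p ≠ 0)
    (h_nonneg : ∀ x ∈ Set.Icc (0 : ι → ℝ) 1, ∀ i, x i = 0 → 0 ≤ g x i)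
    (h_nonpos : ∀ x ∈ Set.Icc (0 : ι → ℝ) 1, ∀ i, x i = 1 → g x i ≤ 0) :
    ∃ y : ι → ℕ, (∀ i, y i < p) ∧
      ∀ i, ∃ u ∈ Set.Icc y (y + 1), ∃ v ∈ Set.Icc y (y + 1),
        0 ≤ g (gridPoint p u) i ∧ g (gridPoint p v) i ≤ 0 := by
  classical
  let label (i : ι) (x : ι → ℕ) : ZMod 2 :=
    if x i ≠ p ∧ (x i = 0 ∨ 0 ≤ g (gridPoint p x) i) then 0 else 1
  obtain ⟨y, hy, h_labels⟩ := exists_unitCube_labels_eq_zero_and_one (p := p) (L := label)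
    (fun i x hx => by simp [label, hx, hp.symm]) (fun i x hx => by simp [label, hx])
  refine ⟨y, hy, fun i => ?_⟩
  obtain ⟨u, hu, v, hv, hu_label, hv_label⟩ := h_labels i
  have mem_cube {z : ι → ℕ} (hz : z ∈ Set.Icc y (y + 1)) : gridPoint p z ∈ Set.Icc 0 1 :=
    gridPoint_mem_Icc fun j => (hz.2 j).trans (hy j)
  refine ⟨u, hu, v, hv, ?_, ?_⟩
  · have hu_cases : u i = 0 ∨ 0 ≤ g (gridPoint p u) i := by
      by_contra h
      simp [label, h] at hu_label
    exact hu_cases.elim (fun h => h_nonneg _ (mem_cube hu) i (by simp [gridPoint, h])) id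
  · have hv_cases : v i = p ∨ g (gridPoint p v) i ≤ 0 := by
      by_contra! h
      simp [label, h.1, h.2.le] at hv_label
    exact hv_cases.elim (fun h => h_nonpos _ (mem_cube hv) i (by simp [gridPoint, h, hp])) id

theorem exists_mem_Icc_forall_abs_lt (hg : ContinuousOn g (Set.Icc 0 1))
    (h_nonneg : ∀ x ∈ Set.Icc (0 : ι → ℝ) 1, ∀ i, x i = 0 → 0 ≤ g x i)
    (h_nonpos : ∀ x ∈ Set.Icc (0 : ι → ℝ) 1, ∀ i, x i = 1 → g x i ≤ 0) {ε : ℝ} (hε : 0 < ε) :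
    ∃ x ∈ Set.Icc (0 : ι → ℝ) 1, ∀ i, |g x i| < ε := by
  cases nonempty_fintype ι
  obtain ⟨δ, hδ, h_unif⟩ := Metric.uniformContinuousOn_iff.1
    (isCompact_Icc.uniformContinuousOn_of_continuous hg) ε hε
  obtain ⟨q, hq⟩ := exists_nat_one_div_lt hδ
  obtain ⟨y, hy, h_signs⟩ :=
    exists_gridPoint_nonneg_and_nonpos q.succ_ne_zero h_nonneg h_nonpos
  have hy_mem : gridPoint (q + 1) y ∈ Set.Icc 0 1 := gridPoint_mem_Icc fun i => (hy i).le
  have close {z : ι → ℕ} (hz : z ∈ Set.Icc y (y + 1)) (i : ι) :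
      |g (gridPoint (q + 1) z) i - g (gridPoint (q + 1) y) i| < ε := by
    have hz_mem : gridPoint (q + 1) z ∈ Set.Icc 0 1 :=
      gridPoint_mem_Icc fun j => (hz.2 j).trans (hy j)
    have h_dist : dist (gridPoint (q + 1) z) (gridPoint (q + 1) y) < δ :=
      (dist_gridPoint_le (q + 1) hz).trans_lt (mod_cast hq)
    exact (dist_le_pi_dist _ _ i).trans_lt (h_unif _ hz_mem _ hy_mem h_dist)
  refine ⟨_, hy_mem, fun i => ?_⟩
  obtain ⟨u, hu, v, hv, hu_nonneg, hv_nonpos⟩ := h_signs i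
  have hu_close := abs_lt.1 (close hu i)
  have hv_close := abs_lt.1 (close hv i)
  exact abs_lt.2 ⟨by linarith, by linarith⟩

/-- The Poincaré–Miranda theorem. -/
theorem exists_mem_Icc_eq_zero_of_nonneg_of_nonpos (hg : ContinuousOn g (Set.Icc 0 1))
    (h_nonneg : ∀ x ∈ Set.Icc (0 : ι → ℝ) 1, ∀ i, x i = 0 → 0 ≤ g x i)
    (h_nonpos : ∀ x ∈ Set.Icc (0 : ι → ℝ) 1, ∀ i, x i = 1 → g x i ≤ 0) :
    ∃ x ∈ Set.Icc (0 : ι → ℝ) 1, g x = 0 := by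
  cases nonempty_fintype ι
  obtain ⟨z, hz, hz_min⟩ :=
    isCompact_Icc.exists_isMinOn (Set.nonempty_Icc.2 zero_le_one) hg.norm
  refine ⟨z, hz, ?_⟩
  by_contra h_ne
  have h_pos : 0 < ‖g z‖ := norm_pos_iff.2 h_ne
  obtain ⟨x, hx, hx_lt⟩ := exists_mem_Icc_forall_abs_lt hg h_nonneg h_nonpos h_pos
  exact ((pi_norm_lt_iff h_pos).2 hx_lt).not_ge (hz_min hx)

end PoincareMiranda

section Brouwer

variable [Finite ι] {f : (ι → ℝ) → ι → ℝ}

/-- Brouwer's fixed point theorem for the cube. -/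
theorem exists_isFixedPt_of_mapsTo_unitCube (hc : ContinuousOn f (Set.Icc 0 1))
    (hm : Set.MapsTo f (Set.Icc 0 1) (Set.Icc 0 1)) :
    ∃ x ∈ Set.Icc (0 : ι → ℝ) 1, Function.IsFixedPt f x := by
  obtain ⟨x, hx, h_zero⟩ := exists_mem_Icc_eq_zero_of_nonneg_of_nonpos (g := fun x => f x - x)
    (hc.sub continuousOn_id)
    (fun x hx i hi => by simpa [hi] using (hm hx).1 i)
    (fun x hx i hi => by simpa [hi] using (hm hx).2 i)
  exact ⟨x, hx, sub_eq_zero.1 h_zero⟩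

theorem exists_mem_Icc_eqOn_and_eqOn_compl (hc : ContinuousOn f (Set.Icc 0 1))
    (hm : Set.MapsTo f (Set.Icc 0 1) (Set.Icc 0 1)) (s : Set ι) {x : ι → ℝ}
    (hx : x ∈ Set.Icc (0 : ι → ℝ) 1) :
    ∃ y ∈ Set.Icc (0 : ι → ℝ) 1, Set.EqOn y x s ∧ Set.EqOn (f y) y sᶜ := by
  classical
  have h_cont : ContinuousOn (fun y => s.piecewise x (f y)) (Set.Icc 0 1) := by
    refine continuousOn_pi.2 fun i => ?_
    by_cases hi : i ∈ s
    · simpa [hi] using continuousOn_const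
    · simpa [hi] using continuousOn_pi.1 hc i
  obtain ⟨y, hy, h_fix⟩ := exists_isFixedPt_of_mapsTo_unitCube h_cont fun y hy =>
    Set.piecewise_mem_Icc (fun i _ => ⟨hx.1 i, hx.2 i⟩) fun i _ => ⟨(hm hy).1 i, (hm hy).2 i⟩
  refine ⟨y, hy, fun i hi => ?_, fun i hi => ?_⟩
  · rw [← h_fix.eq, s.piecewise_eq_of_mem _ _ hi]
  · conv_rhs => rw [← h_fix.eq, s.piecewise_eq_of_notMem _ _ hi]

theorem closed_subcollection_solutions_general (s : Set ι) (hc : ContinuousOn f (Set.Icc 0 1))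
    (hm : Set.MapsTo f (Set.Icc 0 1) (Set.Icc 0 1))
    (hdep : ∀ x ∈ Set.Icc (0 : ι → ℝ) 1, ∀ y ∈ Set.Icc (0 : ι → ℝ) 1,
      Set.EqOn x y s → Set.EqOn (f x) (f y) s) :
    (∃ x ∈ Set.Icc (0 : ι → ℝ) 1, Set.EqOn x (f x) s) ∧
    (∀ x ∈ Set.Icc (0 : ι → ℝ) 1, Set.EqOn x (f x) s →
      ∃ y ∈ Set.Icc (0 : ι → ℝ) 1, Set.EqOn y x s ∧ f y = y) := by
  constructor
  · obtain ⟨x, hx, h_fix⟩ := exists_isFixedPt_of_mapsTo_unitCube hc hm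
    exact ⟨x, hx, fun i _ => congrFun h_fix.symm i⟩
  · intro x hx hx_sol
    obtain ⟨y, hy, hyx, hy_sol⟩ := exists_mem_Icc_eqOn_and_eqOn_compl hc hm s hx
    have hy_sol' : Set.EqOn (f y) y s :=
      (hdep y hy x hx hyx).trans (hx_sol.symm.trans hyx.symm)
    refine ⟨y, hy, hyx, funext fun i => ?_⟩
    exact (em (i ∈ s)).elim (fun hi => hy_sol' hi) fun hi => hy_sol hi

end Brouwer

theorem closed_subcollection_solutions (M M₁ : ℕ) (hM : M₁ ≤ M)
    (f : (Fin M → ℝ) → (Fin M → ℝ))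
    (hc : ContinuousOn f (Set.Icc 0 1))
    (hm : Set.MapsTo f (Set.Icc 0 1) (Set.Icc 0 1))
    (hdep : ∀ x y : Fin M → ℝ, (∀ i : Fin M, (i : ℕ) < M₁ → x i = y i) →
      ∀ i : Fin M, (i : ℕ) < M₁ → f x i = f y i) :
    (∃ x ∈ Set.Icc (0 : Fin M → ℝ) 1, ∀ i : Fin M, (i : ℕ) < M₁ → x i = f x i) ∧
    (∀ x ∈ Set.Icc (0 : Fin M → ℝ) 1,
      (∀ i : Fin M, (i : ℕ) < M₁ → x i = f x i) →
      ∃ y ∈ Set.Icc (0 : Fin M → ℝ) 1,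
        (∀ i : Fin M, (i : ℕ) < M₁ → y i = x i) ∧ f y = y) :=
  closed_subcollection_solutions_general {i : Fin M | (i : ℕ) < M₁} hc hm
    fun x _ y _ => hdep x y
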